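/- Let ε > 0, Re > 0, Bo > 0 be real parameters. Suppose u, v, w, p : ℝ² × [0,1] × ℝ → ℝ and η : ℝ² × ℝ → ℝ are smooth functions satisfying the fully linearized system: in the volume ℝ² × [0,1] × ℝ, u_t − (√ε/Re)(u_xx + ε u_yy + u_zz/ε) + p_x = 0, v_t − (√ε/Re)(v_xx + ε v_yy + v_zz/ε) + √ε p_y = 0, w_t − (√ε/Re)(w_xx + ε w_yy + w_zz/ε) + p_z = 0, u_x + √ε v_y + w_z/ε = 0; on z = 1: u_z + w_x = 0, v_z + √ε w_y = 0, (η − p) + (2/(Re √ε)) w_z = (1/Bo)(η_xx + ε η_yy), η_t − w/ε = 0; and on z = 0: u = v = w = 0. Then w satisfies the four boundary conditions: w_z(x,y,0,t) = 0; w(x,y,0,t) = 0; w_zz − ε w_xx − ε² w_yy = 0 at z = 1; and w_xx + ε w_yy − w_ztt + (3√ε/Re)(w_xxzt + ε w_yyzt) + (1/(Re √ε)) w_zzzt = (1/Bo)(∂_x² + ε ∂_y²)² w at z = 1. -/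

import Mathlib

/-!
Write `Δ = ∂x² + ε ∂y²` for the horizontal Laplacian and `H` for the linear viscous operator of
the momentum equations, which commutes with all partial derivatives. The combination
`u_x + √ε v_y` is the one controlled by incompressibility: it equals `-w_z / ε` throughout the
layer, so the equation may be differentiated in `z` up to the boundary. At the bottom it gives
`w_z = 0`; its `z`-derivative together with the tangential stress conditions gives `w_zz = ε Δ w`
at the surface; and the same combination of the two horizontal momentum equations gives
`ε Δ p = H w_z`. Applying `∂t Δ` to the normal stress condition and replacing `ε Δ p_t` by
`∂t H w_z` and `ε η_t` by `w` leaves an equation for `w` alone.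
-/

noncomputable section

/-- Partial derivative with respect to the first variable `x`. -/
def pdx (f : ℝ → ℝ → ℝ → ℝ → ℝ) : ℝ → ℝ → ℝ → ℝ → ℝ :=
  fun x y z t => deriv (fun x' => f x' y z t) x

/-- Partial derivative with respect to the second variable `y`. -/
def pdy (f : ℝ → ℝ → ℝ → ℝ → ℝ) : ℝ → ℝ → ℝ → ℝ → ℝ :=
  fun x y z t => deriv (fun y' => f x y' z t) y

/-- Partial derivative with respect to the third variable `z`. -/
def pdz (f : ℝ → ℝ → ℝ → ℝ → ℝ) : ℝ → ℝ → ℝ → ℝ → ℝ :=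
  fun x y z t => deriv (fun z' => f x y z' t) z

/-- Partial derivative with respect to the fourth variable `t`. -/
def pdt (f : ℝ → ℝ → ℝ → ℝ → ℝ) : ℝ → ℝ → ℝ → ℝ → ℝ :=
  fun x y z t => deriv (fun t' => f x y z t') t

/-- Partial derivative in `x` for functions of `(x, y, t)`. -/
def qdx (f : ℝ → ℝ → ℝ → ℝ) : ℝ → ℝ → ℝ → ℝ :=
  fun x y t => deriv (fun x' => f x' y t) x

/-- Partial derivative in `y` for functions of `(x, y, t)`. -/
def qdy (f : ℝ → ℝ → ℝ → ℝ) : ℝ → ℝ → ℝ → ℝ :=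
  fun x y t => deriv (fun y' => f x y' t) y

/-- Partial derivative in `t` for functions of `(x, y, t)`. -/
def qdt (f : ℝ → ℝ → ℝ → ℝ) : ℝ → ℝ → ℝ → ℝ :=
  fun x y t => deriv (fun t' => f x y t') t

/-- The operator `∂_x² + ε ∂_y²`. -/
def Pop (ε : ℝ) (f : ℝ → ℝ → ℝ → ℝ → ℝ) : ℝ → ℝ → ℝ → ℝ → ℝ :=
  fun x y z t => pdx (pdx f) x y z t + ε * pdy (pdy f) x y z t

open Set
open scoped Manifold ContDiff

local notation "C∞(" E ", " F ")" => C^∞⟮𝓘(ℝ, E), E; 𝓘(ℝ, F), F⟯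

section DirectionalDerivative

variable {E F : Type*} [NormedAddCommGroup E] [NormedSpace ℝ E]
  [NormedAddCommGroup F] [NormedSpace ℝ F]

theorem differentiable_of_smooth (f : C∞(E, F)) : Differentiable ℝ f :=
  f.contMDiff.contDiff.differentiable (by simp)

theorem contDiff_fderiv_of_smooth (f : C∞(E, F)) : ContDiff ℝ ∞ (fderiv ℝ f) :=
  f.contMDiff.contDiff.fderiv_right (by simp)

/-- The derivative in the fixed direction `e`, as a linear operator on smooth functions. -/
def dirDeriv (e : E) : C∞(E, F) →ₗ[ℝ] C∞(E, F) where
  toFun f := ⟨fun q => fderiv ℝ f q e,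
    ((contDiff_fderiv_of_smooth f).clm_apply contDiff_const).contMDiff⟩
  map_add' f g := ContMDiffMap.ext fun q => DFunLike.congr_fun
    (fderiv_add (differentiable_of_smooth f q) (differentiable_of_smooth g q)) e
  map_smul' c f := ContMDiffMap.ext fun q => DFunLike.congr_fun
    (fderiv_const_smul (differentiable_of_smooth f q) c) e

theorem dirDeriv_apply (e : E) (f : C∞(E, F)) (q : E) : dirDeriv e f q = fderiv ℝ f q e :=
  rfl

theorem dirDeriv_comm (d e : E) (f : C∞(E, F)) :
    dirDeriv d (dirDeriv e f) = dirDeriv e (dirDeriv d f) := by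
  ext q
  have second_deriv (a b : E) :
      dirDeriv a (dirDeriv b f) q = fderiv ℝ (fderiv ℝ f) q a b := by
    have hf : DifferentiableAt ℝ (fderiv ℝ f) q :=
      (contDiff_fderiv_of_smooth f).differentiable (by simp) q
    change fderiv ℝ (fun q => fderiv ℝ f q b) q a = _
    simp [fderiv_clm_apply hf (differentiableAt_const b)]
  have symm : IsSymmSndFDerivAt ℝ f q :=
    f.contMDiff.contDiff.contDiffAt.isSymmSndFDerivAt <|
      by simpa using WithTop.coe_le_coe.2 (OrderTop.le_top (2 : ℕ∞))
  rw [second_deriv, second_deriv, symm.eq]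

theorem hasDerivAt_smooth_comp (f : C∞(E, F)) {γ : ℝ → E} {γ' : E} {s : ℝ}
    (hγ : HasDerivAt γ γ' s) : HasDerivAt (fun r => f (γ r)) (dirDeriv γ' f (γ s)) s :=
  (differentiable_of_smooth f (γ s)).hasFDerivAt.comp_hasDerivAt s hγ

theorem eqOn_dirDeriv_of_uniqueDiffOn {S : Set E} (hS : UniqueDiffOn ℝ S) {f g : C∞(E, F)}
    (h : EqOn f g S) (e : E) : EqOn (dirDeriv e f) (dirDeriv e g) S := by
  intro q hq
  simp only [dirDeriv_apply, ← fderivWithin_eq_fderiv (hS q hq) (differentiable_of_smooth _ q),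
    fderivWithin_congr h (h hq)]

theorem eqOn_dirDeriv_of_line_subset {S : Set E} {e : E} (hS : ∀ q ∈ S, ∀ r : ℝ, q + r • e ∈ S)
    {f g : C∞(E, F)} (h : EqOn f g S) : EqOn (dirDeriv e f) (dirDeriv e g) S := by
  intro q hq
  have line : HasDerivAt (fun r : ℝ => q + r • e) e 0 := by
    simpa using ((hasDerivAt_id (0 : ℝ)).smul_const e).const_add q
  have h_line : (fun r : ℝ => f (q + r • e)) = fun r => g (q + r • e) :=
    funext fun r => h (hS q hq r)
  have hf := hasDerivAt_smooth_comp f line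
  rw [h_line] at hf
  simpa using hf.unique (hasDerivAt_smooth_comp g line)

end DirectionalDerivative

section Coordinates

/-- The coordinates `(x, y, z, t)`. -/
abbrev SpaceTime : Type := ℝ × ℝ × ℝ × ℝ

local notation "Smooth" => C∞(SpaceTime, ℝ)
local notation "∂x" => dirDeriv (F := ℝ) ((1, 0, 0, 0) : SpaceTime)
local notation "∂y" => dirDeriv (F := ℝ) ((0, 1, 0, 0) : SpaceTime)
local notation "∂z" => dirDeriv (F := ℝ) ((0, 0, 1, 0) : SpaceTime)
local notation "∂t" => dirDeriv (F := ℝ) ((0, 0, 0, 1) : SpaceTime)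

/-- A function on space-time as a function of four real arguments, the form on which the operators
`pdx`, `pdy`, `pdz` and `pdt` act. -/
def curried : Smooth →ₗ[ℝ] (ℝ → ℝ → ℝ → ℝ → ℝ) where
  toFun f := fun x y z t => f (x, y, z, t)
  map_add' _ _ := rfl
  map_smul' _ _ := rfl

theorem exists_eq_curried {f : ℝ → ℝ → ℝ → ℝ → ℝ}
    (hf : ContDiff ℝ ∞ (fun q : SpaceTime => f q.1 q.2.1 q.2.2.1 q.2.2.2)) :
    ∃ g : Smooth, f = curried g :=
  ⟨⟨_, hf.contMDiff⟩, rfl⟩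

theorem pdx_curried (f : Smooth) : pdx (curried f) = curried (∂x f) := by
  ext x y z t
  exact (hasDerivAt_smooth_comp f
    ((hasDerivAt_id x).prodMk (hasDerivAt_const x (y, z, t)))).deriv

theorem pdy_curried (f : Smooth) : pdy (curried f) = curried (∂y f) := by
  ext x y z t
  exact (hasDerivAt_smooth_comp f ((hasDerivAt_const y x).prodMk
    ((hasDerivAt_id y).prodMk (hasDerivAt_const y (z, t))))).deriv

theorem pdz_curried (f : Smooth) : pdz (curried f) = curried (∂z f) := by
  ext x y z t
  exact (hasDerivAt_smooth_comp f ((hasDerivAt_const z x).prodMk ((hasDerivAt_const z y).prodMk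
    ((hasDerivAt_id z).prodMk (hasDerivAt_const z t))))).deriv

theorem pdt_curried (f : Smooth) : pdt (curried f) = curried (∂t f) := by
  ext x y z t
  exact (hasDerivAt_smooth_comp f ((hasDerivAt_const t x).prodMk ((hasDerivAt_const t y).prodMk
    ((hasDerivAt_const t z).prodMk (hasDerivAt_id t))))).deriv

theorem exists_surface_extension {η : ℝ → ℝ → ℝ → ℝ}
    (hη : ContDiff ℝ ∞ (fun q : ℝ × ℝ × ℝ => η q.1 q.2.1 q.2.2)) :
    ∃ g : Smooth, ∀ x y z t, η x y t = curried g x y z t ∧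
      qdt η x y t = curried (∂t g) x y z t ∧
      qdx (qdx η) x y t = curried (∂x (∂x g)) x y z t ∧
      qdy (qdy η) x y t = curried (∂y (∂y g)) x y z t := by
  have projection : ContDiff ℝ ∞ (fun q : SpaceTime => (q.1, q.2.1, q.2.2.2)) := by fun_prop
  obtain ⟨g, hg⟩ := exists_eq_curried (f := fun x y _ t => η x y t) (hη.comp projection)
  refine ⟨g, fun x y z t => ?_⟩
  simp only [← pdx_curried, ← pdy_curried, ← pdt_curried]
  rw [← hg]
  exact ⟨rfl, rfl, rfl, rfl⟩

/-- The points of space-time whose vertical coordinate `z` lies in `I`: the fluid layer for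
`I = [0, 1]`, its bottom for `I = {0}`, its mean surface for `I = {1}`. -/
def slab (I : Set ℝ) : Set SpaceTime := univ ×ˢ univ ×ˢ I ×ˢ univ

theorem mem_slab {I : Set ℝ} {q : SpaceTime} : q ∈ slab I ↔ q.2.2.1 ∈ I := by
  simp [slab]

theorem eqOn_slab_iff {I : Set ℝ} {f g : Smooth} :
    EqOn f g (slab I) ↔ ∀ x y t, ∀ z ∈ I, curried f x y z t = curried g x y z t :=
  ⟨fun h _ _ _ _ hz => h (mem_slab.2 hz),
    fun h q hq => h q.1 q.2.1 q.2.2.2 q.2.2.1 (mem_slab.1 hq)⟩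

theorem eqOn_slab_singleton_iff {c : ℝ} {f g : Smooth} :
    EqOn f g (slab {c}) ↔ ∀ x y t, curried f x y c t = curried g x y c t := by
  simp only [eqOn_slab_iff, mem_singleton_iff, forall_eq]

theorem slab_mono {I J : Set ℝ} (h : I ⊆ J) : slab I ⊆ slab J :=
  fun _ hq => mem_slab.2 (h (mem_slab.1 hq))

theorem uniqueDiffOn_slab {I : Set ℝ} (hI : UniqueDiffOn ℝ I) : UniqueDiffOn ℝ (slab I) :=
  uniqueDiffOn_univ.prod (uniqueDiffOn_univ.prod (hI.prod uniqueDiffOn_univ))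

theorem eqOn_dirDeriv_of_horizontal {I : Set ℝ} {f g : Smooth} (h : EqOn f g (slab I))
    (a b c : ℝ) : EqOn (dirDeriv (a, b, 0, c) f) (dirDeriv (a, b, 0, c) g) (slab I) :=
  eqOn_dirDeriv_of_line_subset (fun q hq r => by simpa [mem_slab] using hq) h

local notation:50 f " ≡[" S "] " g => EqOn (⇑(f : Smooth)) (⇑(g : Smooth)) S

/-- The horizontal Laplacian `∂x² + ε ∂y²`, the counterpart of `Pop ε` on bundled functions. -/
def horizLaplacian (ε : ℝ) : Smooth →ₗ[ℝ] Smooth := ∂x ∘ₗ ∂x + ε • ∂y ∘ₗ ∂y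

theorem horizLaplacian_apply (ε : ℝ) (f : Smooth) :
    horizLaplacian ε f = ∂x (∂x f) + ε • ∂y (∂y f) :=
  rfl

theorem Pop_curried (ε : ℝ) (f : Smooth) : Pop ε (curried f) = curried (horizLaplacian ε f) := by
  ext x y z t
  simp only [Pop, pdx_curried, pdy_curried, horizLaplacian_apply, map_add, map_smul,
    Pi.add_apply, Pi.smul_apply, smul_eq_mul]

theorem dirDeriv_horizLaplacian (e : SpaceTime) (ε : ℝ) (f : Smooth) :
    dirDeriv e (horizLaplacian ε f) = horizLaplacian ε (dirDeriv e f) := by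
  simp only [horizLaplacian_apply, map_add, map_smul, dirDeriv_comm e]

theorem eqOn_horizLaplacian {I : Set ℝ} {f g : Smooth} (h : f ≡[slab I] g) (ε : ℝ) :
    horizLaplacian ε f ≡[slab I] horizLaplacian ε g := by
  have hxx := eqOn_dirDeriv_of_horizontal (eqOn_dirDeriv_of_horizontal h 1 0 0) 1 0 0
  have hyy := eqOn_dirDeriv_of_horizontal (eqOn_dirDeriv_of_horizontal h 0 1 0) 0 1 0
  exact fun q hq => congrArg₂ (fun a b => a + ε * b) (hxx hq) (hyy hq)

/-- The operator `∂t - a (∂x² + ε ∂y² + ∂z² / ε)` which the momentum equations apply to each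
velocity component; there `a = √ε / Re`. -/
def viscousOperator (a ε : ℝ) : Smooth →ₗ[ℝ] Smooth :=
  ∂t - a • (horizLaplacian ε + ε⁻¹ • ∂z ∘ₗ ∂z)

theorem viscousOperator_apply (a ε : ℝ) (f : Smooth) :
    viscousOperator a ε f = ∂t f - a • (horizLaplacian ε f + ε⁻¹ • ∂z (∂z f)) :=
  rfl

theorem dirDeriv_viscousOperator (e : SpaceTime) (a ε : ℝ) (f : Smooth) :
    dirDeriv e (viscousOperator a ε f) = viscousOperator a ε (dirDeriv e f) := by
  simp only [viscousOperator_apply, map_add, map_sub, map_smul, dirDeriv_horizLaplacian,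
    dirDeriv_comm e]

theorem eqOn_viscousOperator {I : Set ℝ} (hI : UniqueDiffOn ℝ I) {f g : Smooth}
    (h : f ≡[slab I] g) (a ε : ℝ) : viscousOperator a ε f ≡[slab I] viscousOperator a ε g := by
  have deriv {f g : Smooth} (h : f ≡[slab I] g) (e : SpaceTime) :
      dirDeriv e f ≡[slab I] dirDeriv e g :=
    eqOn_dirDeriv_of_uniqueDiffOn (uniqueDiffOn_slab hI) h e
  intro q hq
  have ht := deriv h (0, 0, 0, 1) hq
  have hzz := deriv (deriv h (0, 0, 1, 0)) (0, 0, 1, 0) hq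
  have hΔ := eqOn_horizLaplacian h ε hq
  simp only [viscousOperator_apply, ContMDiffMap.coe_add, ContMDiffMap.coe_sub,
    ContMDiffMap.coe_smul, Pi.add_apply, Pi.sub_apply, Pi.smul_apply, ht, hzz, hΔ]

-- `κ`, `ν` and `β` stand for `√ε`, `1 / Re` and `1 / Bo`.
variable {κ ν β : ℝ} {u v w p η : Smooth}

theorem dz_eq_zero_of_noSlip (hκ : κ ≠ 0)
    (mass : ∂x u + κ • ∂y v + (κ ^ 2)⁻¹ • ∂z w ≡[slab {0}] 0)
    (u_bottom : u ≡[slab {0}] 0) (v_bottom : v ≡[slab {0}] 0) : ∂z w ≡[slab {0}] 0 := by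
  intro q hq
  have hux := eqOn_dirDeriv_of_horizontal u_bottom 1 0 0 hq
  have hvy := eqOn_dirDeriv_of_horizontal v_bottom 0 1 0 hq
  have hmass := mass hq
  simp only [ContMDiffMap.coe_add, ContMDiffMap.coe_smul, Pi.add_apply, Pi.smul_apply, smul_eq_mul,
    map_zero] at hux hvy hmass ⊢
  rw [hux, hvy] at hmass
  simpa [hκ] using hmass

theorem dzz_eq_of_tangential_stress (hκ : κ ≠ 0)
    (mass : ∂x u + κ • ∂y v + (κ ^ 2)⁻¹ • ∂z w ≡[slab (Icc 0 1)] 0)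
    (stress_x : ∂z u + ∂x w ≡[slab {1}] 0) (stress_y : ∂z v + κ • ∂y w ≡[slab {1}] 0) :
    ∂z (∂z w) ≡[slab {1}] κ ^ 2 • horizLaplacian (κ ^ 2) w := by
  intro q hq
  have hmass := eqOn_dirDeriv_of_uniqueDiffOn (uniqueDiffOn_slab (uniqueDiffOn_Icc one_pos))
    mass (0, 0, 1, 0) (slab_mono (by simp) hq)
  have hx := eqOn_dirDeriv_of_horizontal stress_x 1 0 0 hq
  have hy := eqOn_dirDeriv_of_horizontal stress_y 0 1 0 hq
  simp only [horizLaplacian_apply, map_zero, map_add, map_smul, ContMDiffMap.coe_zero,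
    ContMDiffMap.coe_add, ContMDiffMap.coe_smul, Pi.zero_apply, Pi.add_apply, Pi.smul_apply,
    smul_eq_mul, dirDeriv_comm ((0, 0, 1, 0) : SpaceTime) (1, 0, 0, 0),
    dirDeriv_comm ((0, 0, 1, 0) : SpaceTime) (0, 1, 0, 0)] at hmass hx hy ⊢
  field_simp at hmass
  linear_combination hmass - κ ^ 2 * hx - κ ^ 3 * hy

theorem horizLaplacian_pressure_eq {a : ℝ}
    (momentum_x : viscousOperator a (κ ^ 2) u + ∂x p ≡[slab {1}] 0)
    (momentum_y : viscousOperator a (κ ^ 2) v + κ • ∂y p ≡[slab {1}] 0)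
    (mass : ∂x u + κ • ∂y v + (κ ^ 2)⁻¹ • ∂z w ≡[slab (Icc 0 1)] 0) :
    horizLaplacian (κ ^ 2) p ≡[slab {1}] (κ ^ 2)⁻¹ • viscousOperator a (κ ^ 2) (∂z w) := by
  intro q hq
  have hmass := eqOn_viscousOperator (uniqueDiffOn_Icc one_pos) mass a (κ ^ 2)
    (slab_mono (by simp) hq)
  have hx := eqOn_dirDeriv_of_horizontal momentum_x 1 0 0 hq
  have hy := eqOn_dirDeriv_of_horizontal momentum_y 0 1 0 hq
  simp only [horizLaplacian_apply, dirDeriv_viscousOperator, map_zero, map_add, map_smul,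
    ContMDiffMap.coe_zero, ContMDiffMap.coe_add, ContMDiffMap.coe_smul, Pi.zero_apply, Pi.add_apply,
    Pi.smul_apply, smul_eq_mul] at hmass hx hy ⊢
  linear_combination hx + κ * hy - hmass

theorem surface_equation_of_normal_stress (hκ : κ ≠ 0)
    (pressure : horizLaplacian (κ ^ 2) p ≡[slab {1}]
      (κ ^ 2)⁻¹ • viscousOperator (κ * ν) (κ ^ 2) (∂z w))
    (stress_z : η - p + (2 * ν / κ) • ∂z w ≡[slab {1}] β • horizLaplacian (κ ^ 2) η)
    (kinematic : ∂t η - (κ ^ 2)⁻¹ • w ≡[slab {1}] 0) :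
    horizLaplacian (κ ^ 2) w - ∂t (∂t (∂z w)) + (3 * κ * ν) • ∂t (∂z (horizLaplacian (κ ^ 2) w))
      + (ν / κ) • ∂t (∂z (∂z (∂z w)))
      ≡[slab {1}] β • horizLaplacian (κ ^ 2) (horizLaplacian (κ ^ 2) w) := by
  intro q hq
  have hpressure := eqOn_dirDeriv_of_horizontal pressure 0 0 1 hq
  have hstress := eqOn_horizLaplacian (eqOn_dirDeriv_of_horizontal stress_z 0 0 1) (κ ^ 2) hq
  have hη := eqOn_horizLaplacian kinematic (κ ^ 2)
  have hΔη := eqOn_horizLaplacian hη (κ ^ 2) hq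
  specialize hη hq
  simp only [viscousOperator_apply, dirDeriv_horizLaplacian, map_zero, map_add, map_sub, map_smul,
    ContMDiffMap.coe_zero, ContMDiffMap.coe_add, ContMDiffMap.coe_sub, ContMDiffMap.coe_smul,
    Pi.zero_apply, Pi.add_apply, Pi.sub_apply, Pi.smul_apply, smul_eq_mul]
    at hpressure hstress hη hΔη ⊢
  field_simp at hpressure hstress hη hΔη ⊢
  linear_combination κ ^ 2 * hstress + hpressure - κ * hη + κ * β * hΔη

theorem boundary_conditions_for_w_general {ε ν β : ℝ} (hε : 0 < ε)
    {u v w p : ℝ → ℝ → ℝ → ℝ → ℝ} {η : ℝ → ℝ → ℝ → ℝ}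
    (hu : ContDiff ℝ ∞ (fun q : SpaceTime => u q.1 q.2.1 q.2.2.1 q.2.2.2))
    (hv : ContDiff ℝ ∞ (fun q : SpaceTime => v q.1 q.2.1 q.2.2.1 q.2.2.2))
    (hw : ContDiff ℝ ∞ (fun q : SpaceTime => w q.1 q.2.1 q.2.2.1 q.2.2.2))
    (hp : ContDiff ℝ ∞ (fun q : SpaceTime => p q.1 q.2.1 q.2.2.1 q.2.2.2))
    (hη : ContDiff ℝ ∞ (fun q : ℝ × ℝ × ℝ => η q.1 q.2.1 q.2.2))
    (momentum_x : ∀ x y t, pdt u x y 1 t - √ε * ν *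
      (pdx (pdx u) x y 1 t + ε * pdy (pdy u) x y 1 t + pdz (pdz u) x y 1 t / ε)
        + pdx p x y 1 t = 0)
    (momentum_y : ∀ x y t, pdt v x y 1 t - √ε * ν *
      (pdx (pdx v) x y 1 t + ε * pdy (pdy v) x y 1 t + pdz (pdz v) x y 1 t / ε)
        + √ε * pdy p x y 1 t = 0)
    (mass : ∀ x y t, ∀ z ∈ Icc (0 : ℝ) 1,
      pdx u x y z t + √ε * pdy v x y z t + pdz w x y z t / ε = 0)
    (stress_x : ∀ x y t, pdz u x y 1 t + pdx w x y 1 t = 0)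
    (stress_y : ∀ x y t, pdz v x y 1 t + √ε * pdy w x y 1 t = 0)
    (stress_z : ∀ x y t, η x y t - p x y 1 t + 2 * ν / √ε * pdz w x y 1 t
      = β * (qdx (qdx η) x y t + ε * qdy (qdy η) x y t))
    (kinematic : ∀ x y t, qdt η x y t - w x y 1 t / ε = 0)
    (u_bottom : ∀ x y t, u x y 0 t = 0) (v_bottom : ∀ x y t, v x y 0 t = 0) (x y t : ℝ) :
    pdz w x y 0 t = 0 ∧
    pdz (pdz w) x y 1 t - ε * pdx (pdx w) x y 1 t - ε ^ 2 * pdy (pdy w) x y 1 t = 0 ∧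
    pdx (pdx w) x y 1 t + ε * pdy (pdy w) x y 1 t - pdt (pdt (pdz w)) x y 1 t
      + 3 * √ε * ν * (pdt (pdz (pdx (pdx w))) x y 1 t + ε * pdt (pdz (pdy (pdy w))) x y 1 t)
      + ν / √ε * pdt (pdz (pdz (pdz w))) x y 1 t
      = β * Pop ε (Pop ε w) x y 1 t := by
  obtain ⟨κ, hκ, rfl⟩ : ∃ κ, 0 < κ ∧ ε = κ ^ 2 :=
    ⟨√ε, Real.sqrt_pos.2 hε, (Real.sq_sqrt hε.le).symm⟩
  obtain ⟨u, rfl⟩ := exists_eq_curried hu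
  obtain ⟨v, rfl⟩ := exists_eq_curried hv
  obtain ⟨w, rfl⟩ := exists_eq_curried hw
  obtain ⟨p, rfl⟩ := exists_eq_curried hp
  obtain ⟨η, hη⟩ := exists_surface_extension hη
  simp only [Real.sqrt_sq hκ.le, pdx_curried, pdy_curried, pdz_curried, pdt_curried, Pop_curried,
    hη _ _ 1 _, div_eq_inv_mul _ (κ ^ 2)] at *
  have bottom := dz_eq_zero_of_noSlip hκ.ne' ((eqOn_slab_iff.2 mass).mono (slab_mono (by simp)))
    (eqOn_slab_singleton_iff.2 u_bottom) (eqOn_slab_singleton_iff.2 v_bottom)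
  have tangential := dzz_eq_of_tangential_stress hκ.ne' (eqOn_slab_iff.2 mass)
    (eqOn_slab_singleton_iff.2 stress_x) (eqOn_slab_singleton_iff.2 stress_y)
  have pressure := horizLaplacian_pressure_eq (eqOn_slab_singleton_iff.2 momentum_x)
    (eqOn_slab_singleton_iff.2 momentum_y) (eqOn_slab_iff.2 mass)
  have normal := surface_equation_of_normal_stress hκ.ne' pressure
    (eqOn_slab_singleton_iff.2 stress_z) (eqOn_slab_singleton_iff.2 kinematic)
  rw [eqOn_slab_singleton_iff] at bottom tangential normal
  simp only [horizLaplacian_apply, map_add, map_sub, map_smul, Pi.add_apply, Pi.sub_apply,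
    Pi.smul_apply, smul_eq_mul] at tangential normal ⊢
  refine ⟨bottom x y t, ?_, ?_⟩
  · linear_combination tangential x y t
  · linear_combination normal x y t

end Coordinates

theorem boundary_conditions_for_w
    (ε Re Bo : ℝ) (hε : 0 < ε) (hRe : 0 < Re) (hBo : 0 < Bo)
    (u v w p : ℝ → ℝ → ℝ → ℝ → ℝ) (η : ℝ → ℝ → ℝ → ℝ)
    (hu : ContDiff ℝ (⊤ : ℕ∞) (fun q : ℝ × ℝ × ℝ × ℝ => u q.1 q.2.1 q.2.2.1 q.2.2.2))
    (hv : ContDiff ℝ (⊤ : ℕ∞) (fun q : ℝ × ℝ × ℝ × ℝ => v q.1 q.2.1 q.2.2.1 q.2.2.2))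
    (hw : ContDiff ℝ (⊤ : ℕ∞) (fun q : ℝ × ℝ × ℝ × ℝ => w q.1 q.2.1 q.2.2.1 q.2.2.2))
    (hp : ContDiff ℝ (⊤ : ℕ∞) (fun q : ℝ × ℝ × ℝ × ℝ => p q.1 q.2.1 q.2.2.1 q.2.2.2))
    (hη : ContDiff ℝ (⊤ : ℕ∞) (fun q : ℝ × ℝ × ℝ => η q.1 q.2.1 q.2.2))
    (hequ : ∀ (x y t : ℝ), ∀ z ∈ Set.Icc (0:ℝ) 1,
      pdt u x y z t - (Real.sqrt ε / Re) *
        (pdx (pdx u) x y z t + ε * pdy (pdy u) x y z t + pdz (pdz u) x y z t / ε)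
        + pdx p x y z t = 0)
    (heqv : ∀ (x y t : ℝ), ∀ z ∈ Set.Icc (0:ℝ) 1,
      pdt v x y z t - (Real.sqrt ε / Re) *
        (pdx (pdx v) x y z t + ε * pdy (pdy v) x y z t + pdz (pdz v) x y z t / ε)
        + Real.sqrt ε * pdy p x y z t = 0)
    (heqw : ∀ (x y t : ℝ), ∀ z ∈ Set.Icc (0:ℝ) 1,
      pdt w x y z t - (Real.sqrt ε / Re) *
        (pdx (pdx w) x y z t + ε * pdy (pdy w) x y z t + pdz (pdz w) x y z t / ε)
        + pdz p x y z t = 0)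
    (hdiv : ∀ (x y t : ℝ), ∀ z ∈ Set.Icc (0:ℝ) 1,
      pdx u x y z t + Real.sqrt ε * pdy v x y z t + pdz w x y z t / ε = 0)
    (hbc1 : ∀ (x y t : ℝ), pdz u x y 1 t + pdx w x y 1 t = 0)
    (hbc2 : ∀ (x y t : ℝ), pdz v x y 1 t + Real.sqrt ε * pdy w x y 1 t = 0)
    (hbc3 : ∀ (x y t : ℝ),
      (η x y t - p x y 1 t) + (2 / (Re * Real.sqrt ε)) * pdz w x y 1 t
        = (1 / Bo) * (qdx (qdx η) x y t + ε * qdy (qdy η) x y t))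
    (hkin : ∀ (x y t : ℝ), qdt η x y t - w x y 1 t / ε = 0)
    (hbot : ∀ (x y t : ℝ), u x y 0 t = 0 ∧ v x y 0 t = 0 ∧ w x y 0 t = 0) :
    ∀ (x y t : ℝ),
      pdz w x y 0 t = 0 ∧
      w x y 0 t = 0 ∧
      pdz (pdz w) x y 1 t - ε * pdx (pdx w) x y 1 t - ε ^ 2 * pdy (pdy w) x y 1 t = 0 ∧
      pdx (pdx w) x y 1 t + ε * pdy (pdy w) x y 1 t - pdt (pdt (pdz w)) x y 1 t
        + (3 * Real.sqrt ε / Re) *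
          (pdt (pdz (pdx (pdx w))) x y 1 t + ε * pdt (pdz (pdy (pdy w))) x y 1 t)
        + (1 / (Re * Real.sqrt ε)) * pdt (pdz (pdz (pdz w))) x y 1 t
        = (1 / Bo) * Pop ε (Pop ε w) x y 1 t := by
  intro x y t
  have coefficients : √ε / Re = √ε * Re⁻¹ ∧ 2 / (Re * √ε) = 2 * Re⁻¹ / √ε ∧
      3 * √ε / Re = 3 * √ε * Re⁻¹ ∧ 1 / (Re * √ε) = Re⁻¹ / √ε :=
    ⟨by ring, by ring, by ring, by ring⟩
  simp only [coefficients] at hequ heqv hbc3 ⊢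
  obtain ⟨bottom, surface⟩ := boundary_conditions_for_w_general hε hu hv hw hp hη
    (hequ · · · 1 (by simp)) (heqv · · · 1 (by simp)) hdiv hbc1 hbc2 hbc3 hkin
    (hbot · · · |>.1) (hbot · · · |>.2.1) x y t
  exact ⟨bottom, (hbot x y t).2.2, surface⟩
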